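/- arXiv:1407.6348 — 2 statements merged into one kernel-verified Lean document; each statement's English description precedes it below -/
import Mathlib

section
/- Let v : ℝ → [0,∞) be a bounded, twice continuously differentiable function with bounded first and second derivatives, and suppose there is a point x_0 ∈ ℝ with v′(x_0) = 0 and v″(x_0) < −1. Let Z be a standard Gaussian random variable and define φ(σ) = E[exp(x_0 + σZ + v(x_0 + σZ))] for σ ≥ 0. Then φ′(x_0-version at σ=0) satisfies φ′(0) = 0 and φ″(0) = e^{x_0+v(x_0)}((1+v′(x_0))² + v″(x_0)) < 0; consequently there exists σ_0 > 0 such that φ is strictly decreasing on [0,σ_0], and in particular E[exp(x_0 + σZ + v(x_0 + σZ))] < e^{x_0+v(x_0)} for every σ ∈ (0,σ_0]. -/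
open MeasureTheory ProbabilityTheory Real Set

lemma aux_integrable (n : ℕ) (a : ℝ) :
    Integrable (fun z : ℝ => |z| ^ n * Real.exp (a * |z|)) (gaussianReal 0 1) := by
  have h : Integrable (fun z : ℝ => (n.factorial : ℝ) * Real.exp ((a + 1) * |z|))
      (gaussianReal 0 1) := by
    apply Integrable.const_mul
    exact integrable_exp_mul_abs (X := fun z : ℝ => z) (integrable_exp_mul_gaussianReal (a + 1))
      (integrable_exp_mul_gaussianReal (-(a + 1)))
  refine h.mono' (by fun_prop) (Filter.Eventually.of_forall fun z => ?_)
  have h1 := Real.pow_div_factorial_le_exp |z| (abs_nonneg z) n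
  have hf : (0 : ℝ) < n.factorial := by exact_mod_cast n.factorial_pos
  rw [div_le_iff₀ hf] at h1
  rw [Real.norm_of_nonneg (by positivity)]
  have : Real.exp ((a + 1) * |z|) = Real.exp |z| * Real.exp (a * |z|) := by
    rw [← Real.exp_add]; congr 1; ring
  rw [this]
  have := mul_le_mul_of_nonneg_right h1 (Real.exp_pos (a * |z|)).le
  linarith

lemma aux_bound (x₀ s z C r : ℝ) (k : ℕ) (h : |s| ≤ r) (g : ℝ → ℝ)
    (hg : ∀ x, |g x| ≤ C * Real.exp x) :
    ‖z ^ k * g (x₀ + s * z)‖ ≤ C * Real.exp x₀ * (|z| ^ k * Real.exp (r * |z|)) := by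
  have hC : 0 ≤ C := by
    have := (abs_nonneg _).trans (hg 0)
    simpa using this
  have h1 : s * z ≤ r * |z| :=
    (le_abs_self _).trans (by rw [abs_mul]; gcongr)
  rw [norm_mul, norm_pow, Real.norm_eq_abs, Real.norm_eq_abs]
  calc |z| ^ k * |g (x₀ + s * z)| ≤ |z| ^ k * (C * Real.exp (x₀ + r * |z|)) := by
        gcongr
        exact (hg _).trans (by gcongr)
    _ = _ := by rw [Real.exp_add]; ring

lemma aux_deriv (x₀ C : ℝ) (k : ℕ) (g g' : ℝ → ℝ) (hd : ∀ x, HasDerivAt g (g' x) x)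
    (hc : Continuous g') (hg : ∀ x, |g x| ≤ C * Real.exp x)
    (hg' : ∀ x, |g' x| ≤ C * Real.exp x) (s₀ : ℝ) :
    HasDerivAt (fun s : ℝ => ∫ z, z ^ k * g (x₀ + s * z) ∂(gaussianReal 0 1))
      (∫ z, z ^ (k + 1) * g' (x₀ + s₀ * z) ∂(gaussianReal 0 1)) s₀ := by
  have hgc : Continuous g := continuous_iff_continuousAt.2 fun x => (hd x).continuousAt
  refine (hasDerivAt_integral_of_dominated_loc_of_deriv_le
    (F := fun s z => z ^ k * g (x₀ + s * z)) (F' := fun s z => z ^ (k + 1) * g' (x₀ + s * z))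
    (bound := fun z => C * Real.exp x₀ * (|z| ^ (k + 1) * Real.exp ((|s₀| + 1) * |z|)))
    (Metric.ball_mem_nhds s₀ one_pos) (Filter.Eventually.of_forall fun s => ?_) ?_ ?_ ?_ ?_ ?_).2
  · exact Continuous.aestronglyMeasurable (by fun_prop)
  · refine ((aux_integrable k |s₀|).const_mul (C * Real.exp x₀)).mono'
      (Continuous.aestronglyMeasurable (by fun_prop)) (Filter.Eventually.of_forall fun z => ?_)
    exact aux_bound x₀ s₀ z C _ k le_rfl g hg
  · exact Continuous.aestronglyMeasurable (by fun_prop)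
  · refine Filter.Eventually.of_forall fun z s hs => ?_
    refine aux_bound x₀ s z C _ (k + 1) ?_ g' hg'
    have h1 : |s - s₀| < 1 := by simpa [Real.dist_eq] using hs
    have := abs_sub_abs_le_abs_sub s s₀
    linarith
  · exact (aux_integrable _ _).const_mul _
  · refine Filter.Eventually.of_forall fun z s _ => ?_
    have h1 : HasDerivAt (fun s : ℝ => x₀ + s * z) z s := by
      simpa using ((hasDerivAt_id s).mul_const z).const_add x₀
    exact (((hd (x₀ + s * z)).comp s h1).const_mul (z ^ k)).congr_deriv (by ring)


/-- Counter-example in discrete time: let `v ≥ 0` be bounded and `C²` with bounded first and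
second derivatives, with `v'(x₀) = 0` and `v''(x₀) < -1`, `Z` standard Gaussian and
`φ(σ) = E[exp(x₀ + σZ + v(x₀ + σZ))]`. Then `φ'(0) = 0`,
`φ''(0) = e^{x₀+v(x₀)}((1+v'(x₀))² + v''(x₀)) < 0`, and `φ` is strictly decreasing on some
`[0,σ₀]`, so `φ(σ) < e^{x₀+v(x₀)}` for `σ ∈ (0,σ₀]`. -/
theorem stmt_7
    {Ω : Type*} [MeasurableSpace Ω] (μ : Measure Ω) [IsProbabilityMeasure μ]
    (Z : Ω → ℝ) (hZmeas : Measurable Z)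
    (hZlaw : Measure.map Z μ = ProbabilityTheory.gaussianReal 0 1)
    (v : ℝ → ℝ) (hvnonneg : ∀ x, 0 ≤ v x)
    (hvC2 : ContDiff ℝ 2 v)
    (Mv : ℝ) (hvbdd : ∀ x, v x ≤ Mv)
    (hvdbdd : ∀ x, |deriv v x| ≤ Mv ∧ |iteratedDeriv 2 v x| ≤ Mv)
    (x₀ : ℝ) (hd1 : deriv v x₀ = 0) (hd2 : iteratedDeriv 2 v x₀ < -1) :
    deriv (fun s : ℝ => ∫ ω, Real.exp (x₀ + s * Z ω + v (x₀ + s * Z ω)) ∂μ) 0 = 0 ∧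
    iteratedDeriv 2 (fun s : ℝ => ∫ ω, Real.exp (x₀ + s * Z ω + v (x₀ + s * Z ω)) ∂μ) 0
      = Real.exp (x₀ + v x₀) * ((1 + deriv v x₀) ^ 2 + iteratedDeriv 2 v x₀) ∧
    iteratedDeriv 2 (fun s : ℝ => ∫ ω, Real.exp (x₀ + s * Z ω + v (x₀ + s * Z ω)) ∂μ) 0
      < 0 ∧
    ∃ σ₀ > (0 : ℝ),
      StrictAntiOn (fun s : ℝ => ∫ ω, Real.exp (x₀ + s * Z ω + v (x₀ + s * Z ω)) ∂μ)
        (Set.Icc 0 σ₀) ∧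
      ∀ s ∈ Set.Ioc (0 : ℝ) σ₀,
        (∫ ω, Real.exp (x₀ + s * Z ω + v (x₀ + s * Z ω)) ∂μ) < Real.exp (x₀ + v x₀) := by
  have hphi : (fun s : ℝ => ∫ ω, Real.exp (x₀ + s * Z ω + v (x₀ + s * Z ω)) ∂μ)
      = fun s : ℝ => ∫ z, z ^ 0 * Real.exp ((x₀ + s * z) + v (x₀ + s * z))
        ∂(gaussianReal 0 1) := by
    funext s
    have hvc : Continuous v := hvC2.continuous
    rw [← hZlaw, integral_map hZmeas.aemeasurable
      (Continuous.aestronglyMeasurable (by fun_prop))]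
    simp
  have hv1 : ∀ x, HasDerivAt v (deriv v x) x := fun x =>
    (hvC2.differentiable (by norm_num) x).hasDerivAt
  have hdv : ContDiff ℝ 1 (deriv v) := by
    have : ContDiff ℝ (1 + 1) v := by simpa [one_add_one_eq_two] using hvC2
    exact (contDiff_succ_iff_deriv.1 this).2.2
  have hit : iteratedDeriv 2 v = deriv (deriv v) := by
    rw [iteratedDeriv_succ, iteratedDeriv_one]
  have hv2 : ∀ x, HasDerivAt (deriv v) (iteratedDeriv 2 v x) x := fun x => by
    rw [hit]; exact (hdv.differentiable (by norm_num) x).hasDerivAt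
  have hc2 : Continuous (iteratedDeriv 2 v) := hvC2.continuous_iteratedDeriv 2 le_rfl
  have hc1 : Continuous (deriv v) := hdv.continuous
  have hc0 : Continuous v := hvC2.continuous
  have hM : 0 ≤ Mv := (hvnonneg 0).trans (hvbdd 0)
  set g0 : ℝ → ℝ := fun x => Real.exp (x + v x) with hg0
  set g1 : ℝ → ℝ := fun x => (1 + deriv v x) * Real.exp (x + v x) with hg1
  set g2 : ℝ → ℝ := fun x => ((1 + deriv v x) ^ 2 + iteratedDeriv 2 v x) * Real.exp (x + v x)
    with hg2
  have d0 : ∀ x, HasDerivAt g0 (g1 x) x := fun x => by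
    have := ((hasDerivAt_id x).add (hv1 x)).exp
    refine HasDerivAt.congr_deriv (f := g0) this ?_
    simp only [hg1, Pi.add_apply, id]; ring
  have d1 : ∀ x, HasDerivAt g1 (g2 x) x := fun x => by
    have := ((hv2 x).const_add 1).mul (d0 x)
    refine HasDerivAt.congr_deriv (f := g1) this ?_
    simp only [hg1, hg2, hg0]; ring
  set C : ℝ := ((1 + Mv) ^ 2 + Mv) * Real.exp Mv with hC
  have key : ∀ x a : ℝ, |a| ≤ (1 + Mv) ^ 2 + Mv →
      |a * Real.exp (x + v x)| ≤ C * Real.exp x := fun x a ha => by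
    rw [abs_mul, abs_of_pos (Real.exp_pos _), Real.exp_add, hC]
    have h1 : Real.exp (v x) ≤ Real.exp Mv := Real.exp_le_exp.2 (hvbdd x)
    calc |a| * (Real.exp x * Real.exp (v x))
        ≤ ((1 + Mv) ^ 2 + Mv) * (Real.exp x * Real.exp Mv) := by gcongr
      _ = _ := by ring
  have ha1 : ∀ x, |1 + deriv v x| ≤ 1 + Mv := fun x =>
    (abs_add_le _ _).trans (by rw [abs_one]; linarith [(hvdbdd x).1])
  have b0 : ∀ x, |g0 x| ≤ C * Real.exp x := fun x => by
    have := key x 1 (by rw [abs_one]; nlinarith)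
    simpa [hg0] using this
  have b1 : ∀ x, |g1 x| ≤ C * Real.exp x := fun x =>
    key x _ ((ha1 x).trans (by nlinarith))
  have b2 : ∀ x, |g2 x| ≤ C * Real.exp x := fun x => by
    refine key x _ ((abs_add_le _ _).trans ?_)
    rw [abs_pow]
    have := ha1 x
    have := (hvdbdd x).2
    gcongr
  have D0 := aux_deriv x₀ C 0 g0 g1 d0 (by fun_prop) b0 b1
  have D1 := aux_deriv x₀ C 1 g1 g2 d1 (by fun_prop) b1 b2
  have m1 : ∫ z, z ∂(gaussianReal 0 1) = 0 := by simp
  have m2 : ∫ z, z ^ 2 ∂(gaussianReal 0 1) = 1 := by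
    have h := variance_fun_id_gaussianReal (μ := 0) (v := 1)
    rw [variance_eq_integral (by fun_prop)] at h
    simpa using h
  rw [hphi]
  change deriv (fun s : ℝ => ∫ z, z ^ 0 * g0 (x₀ + s * z) ∂(gaussianReal 0 1)) 0 = 0 ∧ _
  have hneg : g2 x₀ < 0 := by
    simp only [hg2, hd1]
    exact mul_neg_of_neg_of_pos (by linarith) (Real.exp_pos _)
  have e1 : ∫ z, z ^ (0 + 1) * g1 (x₀ + 0 * z) ∂(gaussianReal 0 1) = 0 := by
    simp [integral_mul_const]
  have e2 : ∫ z, z ^ (1 + 1) * g2 (x₀ + 0 * z) ∂(gaussianReal 0 1) = g2 x₀ := by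
    simp [integral_mul_const, m2]
  have hD : deriv (fun s : ℝ => ∫ z, z ^ 0 * g0 (x₀ + s * z) ∂(gaussianReal 0 1))
      = fun s : ℝ => ∫ z, z ^ 1 * g1 (x₀ + s * z) ∂(gaussianReal 0 1) :=
    funext fun s => (D0 s).deriv
  have hDD : iteratedDeriv 2 (fun s : ℝ => ∫ z, z ^ 0 * g0 (x₀ + s * z) ∂(gaussianReal 0 1)) 0
      = g2 x₀ := by
    rw [iteratedDeriv_succ, iteratedDeriv_one, hD, (D1 0).deriv, e2]
  have hdec : ∃ σ₀ > (0 : ℝ), StrictAntiOn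
      (fun s : ℝ => ∫ z, z ^ 0 * g0 (x₀ + s * z) ∂(gaussianReal 0 1)) (Set.Icc 0 σ₀) := by
    have hs := D1 0
    rw [e2, hasDerivAt_iff_tendsto_slope] at hs
    have hev := hs.eventually (gt_mem_nhds hneg)
    rw [eventually_nhdsWithin_iff, Metric.eventually_nhds_iff] at hev
    obtain ⟨ε, hε, hev⟩ := hev
    refine ⟨ε / 2, by positivity, strictAntiOn_of_deriv_neg (convex_Icc _ _) ?_ ?_⟩
    · exact fun s _ => (D0 s).continuousAt.continuousWithinAt
    · intro s hs
      rw [interior_Icc] at hs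
      have h := hev (y := s) (by rw [Real.dist_eq, sub_zero, abs_of_pos hs.1]; linarith [hs.2])
        hs.1.ne'
      rw [hD]
      have e1' : ∫ z, z ^ 1 * g1 (x₀ + 0 * z) ∂(gaussianReal 0 1) = 0 := e1
      rw [slope_def_field, e1', sub_zero, sub_zero] at h
      by_contra hcon
      exact absurd h (not_lt.2 (div_nonneg (not_lt.1 hcon) hs.1.le))
  obtain ⟨σ₀, hσ, hanti⟩ := hdec
  refine ⟨(D0 0).deriv.trans e1, hDD.trans (by simp only [hg2]; ring), hDD.trans_lt hneg,
    σ₀, hσ, hanti, fun s hs => ?_⟩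
  have h := hanti (left_mem_Icc.2 hσ.le) ⟨hs.1.le, hs.2⟩ hs.1
  have h2 := congrFun hphi s
  have h3 : ∫ z, z ^ 0 * g0 (x₀ + 0 * z) ∂(gaussianReal 0 1) = Real.exp (x₀ + v x₀) := by
    simp [hg0]
  calc _ = _ := h2
    _ < _ := h
    _ = _ := h3
end

section
/- Let Z be a standard Gaussian random variable and let v : ℝ → ℝ be a bounded, non-increasing Borel function which is not almost everywhere constant with respect to the Gaussian law of Z. Then E[e^{v(Z)} Z] < E[e^{v(Z)}]·E[Z] = 0. Consequently, the function ψ(σ) = E[e^{σZ + v(Z)}] satisfies ψ′(0) = E[e^{v(Z)}Z] < 0, and hence there exists σ_0 > 0 such that ψ is strictly decreasing on [0,σ_0]. -/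
open MeasureTheory ProbabilityTheory Real Set

/-- Counter-example via co-monotony: if `Z` is standard Gaussian and `v` is bounded,
non-increasing and not a.e. constant for the Gaussian law, then
`E[e^{v(Z)} Z] < E[e^{v(Z)}]·E[Z] = 0`; consequently `ψ(σ) = E[e^{σZ+v(Z)}]` has
`ψ'(0) = E[e^{v(Z)}Z] < 0` and `ψ` is strictly decreasing on some `[0,σ₀]`. -/
theorem stmt_10
    {Ω : Type*} [MeasurableSpace Ω] (μ : Measure Ω) [IsProbabilityMeasure μ]
    (Z : Ω → ℝ) (hZmeas : Measurable Z)
    (hZlaw : Measure.map Z μ = ProbabilityTheory.gaussianReal 0 1)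
    (v : ℝ → ℝ) (hvmeas : Measurable v)
    (M : ℝ) (hvbdd : ∀ x, |v x| ≤ M)
    (hvmono : Antitone v)
    (hvnonconst : ∀ c : ℝ, ¬ (∀ᵐ z ∂(ProbabilityTheory.gaussianReal 0 1), v z = c)) :
    (∫ ω, Z ω ∂μ) = 0 ∧
    (∫ ω, Real.exp (v (Z ω)) * Z ω ∂μ)
      < (∫ ω, Real.exp (v (Z ω)) ∂μ) * ∫ ω, Z ω ∂μ ∧
    deriv (fun s : ℝ => ∫ ω, Real.exp (s * Z ω + v (Z ω)) ∂μ) 0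
      = ∫ ω, Real.exp (v (Z ω)) * Z ω ∂μ ∧
    deriv (fun s : ℝ => ∫ ω, Real.exp (s * Z ω + v (Z ω)) ∂μ) 0 < 0 ∧
    ∃ σ₀ > (0 : ℝ),
      StrictAntiOn (fun s : ℝ => ∫ ω, Real.exp (s * Z ω + v (Z ω)) ∂μ)
        (Set.Icc 0 σ₀) := by
  have hGE : ∀ t : ℝ, Integrable (fun ω => Real.exp (t * Z ω)) μ := by
    intro t
    have h := integrable_exp_mul_gaussianReal (μ := 0) (v := 1) t
    rw [← hZlaw] at h
    exact h.comp_measurable hZmeas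
  have hZint : Integrable Z μ := by
    have h : Integrable id (gaussianReal 0 1) := 
      (memLp_id_gaussianReal (μ := 0) (v := 1) 1).integrable (by simp)
    rw [← hZlaw] at h
    exact h.comp_measurable hZmeas
  have hZ0 : (∫ ω, Z ω ∂μ) = 0 := by
    have h := integral_id_gaussianReal (μ := 0) (v := 1)
    rw [← hZlaw, integral_map hZmeas.aemeasurable (by fun_prop)] at h
    exact h
  have hem : Measurable (fun ω => Real.exp (v (Z ω))) := by fun_prop
  have hb : ∀ ω, ‖Real.exp (v (Z ω))‖ ≤ Real.exp M := by
    intro ω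
    rw [Real.norm_eq_abs, abs_of_pos (Real.exp_pos _)]
    exact Real.exp_le_exp.2 ((le_abs_self _).trans (hvbdd _))
  have hmul : ∀ g : Ω → ℝ, Integrable g μ → Integrable (fun ω => Real.exp (v (Z ω)) * g ω) μ := by
    intro g hg
    exact hg.bdd_mul hem.aestronglyMeasurable (Filter.Eventually.of_forall hb)
  have hneg : (∫ ω, Real.exp (v (Z ω)) * Z ω ∂μ) < 0 := by
    have hI1 := hmul Z hZint
    have hI2 : Integrable (fun ω => Real.exp (v 0) * Z ω) μ := hZint.const_mul _
    have hI := hI2.sub hI1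
    have hnn : ∀ ω, 0 ≤ Real.exp (v 0) * Z ω - Real.exp (v (Z ω)) * Z ω := by
      intro ω
      rw [← sub_mul]
      rcases le_total 0 (Z ω) with h | h
      · exact mul_nonneg (sub_nonneg.2 (Real.exp_le_exp.2 (hvmono h))) h
      · exact mul_nonneg_of_nonpos_of_nonpos (sub_nonpos.2 (Real.exp_le_exp.2 (hvmono h))) h
    have hE : ∫ ω, (Real.exp (v 0) * Z ω - Real.exp (v (Z ω)) * Z ω) ∂μ
        = - ∫ ω, Real.exp (v (Z ω)) * Z ω ∂μ := by
      rw [integral_sub hI2 hI1, integral_const_mul, hZ0]; ring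
    have hge : 0 ≤ ∫ ω, (Real.exp (v 0) * Z ω - Real.exp (v (Z ω)) * Z ω) ∂μ :=
      integral_nonneg hnn
    rcases hge.lt_or_eq with h | h
    · linarith
    · exfalso
      have h0 := (integral_eq_zero_iff_of_nonneg hnn hI).1 h.symm
      apply hvnonconst (v 0)
      have : NullSingletonClass (gaussianReal 0 1) := nullSingletonClass_gaussianReal one_ne_zero
      have hz : ∀ᵐ z ∂(gaussianReal 0 1), z ≠ 0 := by
        simpa [ae_iff] using measure_singleton (μ := gaussianReal 0 1) (0 : ℝ)
      have h1 : ∀ᵐ z ∂(gaussianReal 0 1), Real.exp (v 0) * z - Real.exp (v z) * z = 0 := by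
        rw [← hZlaw, ae_map_iff hZmeas.aemeasurable]
        · exact h0
        · exact measurableSet_eq_fun (by fun_prop) (by fun_prop)
      filter_upwards [hz, h1] with z hz h1
      rw [← sub_mul] at h1
      have h2 := (mul_eq_zero.1 h1).resolve_right hz
      exact (Real.exp_injective (sub_eq_zero.1 h2)).symm
  -- the tilted measure
  have hfm : Measurable (fun ω => Real.toNNReal (Real.exp (v (Z ω)))) := hem.real_toNNReal
  obtain ⟨ν, hν⟩ : ∃ ν : Measure Ω,
      ν = μ.withDensity (fun ω => ((Real.toNNReal (Real.exp (v (Z ω))) : NNReal) : ENNReal)) :=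
    ⟨_, rfl⟩
  have hνint : ∀ g : Ω → ℝ, ∫ ω, g ω ∂ν = ∫ ω, Real.exp (v (Z ω)) * g ω ∂μ := by
    intro g
    rw [hν, integral_withDensity_eq_integral_smul hfm]
    congr 1; ext ω
    rw [NNReal.smul_def, Real.coe_toNNReal _ (Real.exp_pos _).le, smul_eq_mul]
  have hset : integrableExpSet Z ν = Set.univ := by
    ext t
    simp only [integrableExpSet, Set.mem_ofPred_eq, Set.mem_univ, iff_true]
    rw [hν, integrable_withDensity_iff_integrable_smul hfm]
    convert hmul _ (hGE t) using 2 with ω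
    rw [NNReal.smul_def, Real.coe_toNNReal _ (Real.exp_pos _).le, smul_eq_mul]
  have hψ : (fun s : ℝ => ∫ ω, Real.exp (s * Z ω + v (Z ω)) ∂μ) = mgf Z ν := by
    ext s
    rw [mgf, hνint]
    congr 1; ext ω
    rw [Real.exp_add, mul_comm]
  have hint : ∀ t : ℝ, t ∈ interior (integrableExpSet Z ν) := by simp [hset]
  have hd : deriv (mgf Z ν) 0 = ∫ ω, Real.exp (v (Z ω)) * Z ω ∂μ := by
    rw [deriv_mgf_zero (hint 0), hνint]
  rw [hψ, hd]
  refine ⟨hZ0, by rw [hZ0, mul_zero]; exact hneg, rfl, hneg, ?_⟩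
  have hc : ContinuousAt (deriv (mgf Z ν)) 0 := (analyticAt_mgf (hint 0)).deriv.continuousAt
  have hev : ∀ᶠ x in nhds (0 : ℝ), deriv (mgf Z ν) x < 0 :=
    hc.eventually_lt_const (by rw [hd]; exact hneg)
  obtain ⟨ε, hε, hball⟩ := Metric.eventually_nhds_iff.1 hev
  refine ⟨ε / 2, by positivity, ?_⟩
  apply strictAntiOn_of_deriv_neg (convex_Icc _ _)
  · exact fun x _ => (differentiableAt_mgf (hint x)).continuousAt.continuousWithinAt
  · intro x hx
    rw [interior_Icc] at hx
    apply hball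
    rw [Real.dist_eq, sub_zero, abs_of_pos hx.1]
    linarith [hx.2]
end
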